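/- Let δ > 3 and let V : ℝ³ → ℂ be continuously differentiable with |V(x)| ≤ M ⟨x⟩^{-δ} and |∇V(x)| ≤ M ⟨x⟩^{-δ} for all x ∈ ℝ³ and some M > 0. Then there exists a constant C > 0 such that for all real μ ≥ 1, | ∫∫_{ℝ³×ℝ³} V(x) V(y) · cos(2μ |x − y|) · |x − y|^{-1} dx dy | ≤ C/μ. -/

import Mathlib

open MeasureTheory

/-- Three-dimensional Euclidean space `ℝ³`. -/
abbrev E3 : Type := EuclideanSpace ℝ (Fin 3)

/-- The Japanese bracket `⟨x⟩ := (1 + |x|²)^{1/2}`. -/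
noncomputable def jap (x : E3) : ℝ := Real.sqrt (1 + ‖x‖ ^ 2)

open Set Filter Topology Metric

lemma polar_zero (D F : E3 → ℂ) (hD : Integrable D) (hF : Integrable F)
    (hder : ∀ ω : E3, ‖ω‖ = 1 → ∀ r : ℝ, 0 < r →
      HasDerivAt (fun r : ℝ => (r ^ 2) • F (r • ω)) ((r ^ 2) • D (r • ω)) r)
    (hcont : ∀ ω : E3, ‖ω‖ = 1 →
      ContinuousWithinAt (fun r : ℝ => (r ^ 2) • F (r • ω)) (Ici 0) 0) :
    ∫ z, D z = 0 := by
  have hdim : Module.finrank ℝ E3 - 1 = 2 := by simp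
  have mp := (volume : Measure E3).measurePreserving_homeomorphUnitSphereProd
  rw [hdim] at mp
  have mp' := mp.symm (homeomorphUnitSphereProd E3).toMeasurableEquiv
  have emb := (homeomorphUnitSphereProd E3).symm.measurableEmbedding
  have key : ∀ H : E3 → ℂ, Integrable H →
      Integrable (fun p : sphere (0 : E3) 1 × Ioi (0 : ℝ) => H (p.2.1 • p.1.1))
        ((volume : Measure E3).toSphere.prod (Measure.volumeIoiPow 2)) := by
    intro H hH
    have h1 : Integrable (fun x : ({0}ᶜ : Set E3) => H x) ((volume : Measure E3).comap (↑)) := by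
      have := (integrableOn_iff_comap_subtypeVal (s := ({0}ᶜ : Set E3)) (f := H)
        (μ := volume) (by measurability)).1 hH.integrableOn
      exact this
    have := (mp'.integrable_comp_emb (g := fun x : ({0}ᶜ : Set E3) => H x) emb).2 h1
    refine this.congr (Eventually.of_forall ?_)
    intro p
    rfl
  have key2 : ∀ h : ℝ → ℂ, Integrable (fun r : Ioi (0 : ℝ) => h r) (Measure.volumeIoiPow 2) →
      IntegrableOn (fun r => (r ^ 2) • h r) (Ioi 0) := by
    intro h hh
    rw [Measure.volumeIoiPow, integrable_withDensity_iff_integrable_smul' (by fun_prop) (by simp)] at hh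
    rw [integrableOn_iff_comap_subtypeVal measurableSet_Ioi]
    refine hh.congr (Eventually.of_forall ?_)
    rintro ⟨x, hx : 0 < x⟩
    simp (disch := positivity) [ENNReal.toReal_ofReal]
  have e1 : ∫ z, D z = ∫ p : sphere (0 : E3) 1 × Ioi (0 : ℝ), D (p.2.1 • p.1.1)
      ∂((volume : Measure E3).toSphere.prod (Measure.volumeIoiPow 2)) := by
    calc ∫ z, D z = ∫ x : ({0}ᶜ : Set E3), D x ∂((volume : Measure E3).comap (↑)) := by
          rw [integral_subtype_comap (measurableSet_singleton _).compl fun x ↦ D x,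
            restrict_compl_singleton]
      _ = _ := by
          have := mp'.integral_comp emb (fun x : ({0}ᶜ : Set E3) => D x)
          rw [← this]
          rfl
  rw [e1, integral_prod _ (key D hD)]
  refine integral_eq_zero_of_ae ?_
  filter_upwards [(key D hD).prod_right_ae, (key F hF).prod_right_ae] with ω h1 h2
  have i1 := key2 (fun r => D (r • ω.1)) h1
  have i2 := key2 (fun r => F (r • ω.1)) h2
  have hω : ‖ω.1‖ = 1 := by simpa using ω.2
  have t := tendsto_zero_of_hasDerivAt_of_integrableOn_Ioi (hder _ hω) i1 i2
  have := integral_Ioi_of_hasDerivAt_of_tendsto (hcont _ hω) (hder _ hω) i1 t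
  simp only [Measure.volumeIoiPow, ENNReal.ofReal]
  rw [integral_withDensity_eq_integral_smul,
    integral_subtype_comap measurableSet_Ioi
      fun a ↦ Real.toNNReal (a ^ 2) • D (a • ω.1),
    setIntegral_congr_fun (g := fun a => (a^2) • D (a • ω.1)) measurableSet_Ioi fun x hx ↦ ?_, this]
  · simp
  · simp only []
    rw [NNReal.smul_def, Real.coe_toNNReal _ (pow_nonneg hx.out.le _)]
  · exact (measurable_subtype_coe.pow_const _).real_toNNReal

lemma jap_ge (x : E3) : 1 ≤ jap x := by
  unfold jap
  rw [Real.one_le_sqrt]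
  nlinarith [sq_nonneg ‖x‖]

lemma jap_le_one (δ : ℝ) (hδ : 3 < δ) (x : E3) : jap x ^ (-δ) ≤ 1 :=
  Real.rpow_le_one_of_one_le_of_nonpos (jap_ge x) (by linarith)

lemma jap_int (δ : ℝ) (hδ : 3 < δ) : Integrable (fun x : E3 => jap x ^ (-δ)) := by
  have := integrable_rpow_neg_one_add_norm_sq (E := E3) (μ := volume) (r := δ) (by simpa using hδ)
  refine this.congr (Eventually.of_forall fun x => ?_)
  simp only [jap, Real.sqrt_eq_rpow]
  rw [← Real.rpow_mul (by positivity)]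
  congr 1
  ring

/-- the local singular part -/
noncomputable def sing (z : E3) : ℝ := (ball (0 : E3) 1).indicator (fun z => (‖z‖ ^ 2)⁻¹) z

lemma sing_int : Integrable sing := by
  unfold sing
  rw [integrable_indicator_iff measurableSet_ball,
    integrableOn_fun_norm_addHaar (volume : Measure E3) (f := fun r : ℝ => (r ^ 2)⁻¹)]
  have : IntegrableOn (fun _ : ℝ => (1 : ℝ)) (Ioo 0 1) := by simp
  refine this.congr_fun (fun x hx => ?_) measurableSet_Ioo
  have : x ≠ 0 := hx.1.ne'
  simp [this]

lemma dom (a : ℝ) (ha : 0 ≤ a) (ha' : a ≤ 1) (z : E3) :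
    a * ‖z‖⁻¹ ≤ sing z + a ∧ a * (‖z‖ ^ 2)⁻¹ ≤ sing z + a := by
  unfold sing
  by_cases hz : ‖z‖ < 1
  · have : z ∈ ball (0 : E3) 1 := by simpa using hz
    rw [indicator_of_mem this]
    have h2 : ‖z‖⁻¹ ≤ (‖z‖ ^ 2)⁻¹ := by
      rcases eq_or_lt_of_le (norm_nonneg z) with h | h
      · simp [← h]
      · apply inv_anti₀ (by positivity)
        nlinarith
    have h1 : 0 ≤ (‖z‖ ^ 2)⁻¹ := by positivity
    have h3 : 0 ≤ ‖z‖⁻¹ := by positivity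
    constructor <;> nlinarith
  · have : z ∉ ball (0 : E3) 1 := by simpa using hz
    rw [indicator_of_notMem this]
    push Not at hz
    have h1 : (‖z‖ ^ 2)⁻¹ ≤ 1 := inv_le_one_of_one_le₀ (by nlinarith)
    have h2 : ‖z‖⁻¹ ≤ 1 := inv_le_one_of_one_le₀ hz
    constructor <;> nlinarith

lemma inner_bound (M : ℝ) (hM : 0 < M) (W : E3 → ℂ) (hW : ContDiff ℝ 1 W) (j : E3 → ℝ)
    (hj0 : ∀ z, 0 ≤ j z) (hj1 : ∀ z, j z ≤ 1) (hji : Integrable j)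
    (hb : ∀ z, ‖W z‖ ≤ M * j z) (hb' : ∀ z, ‖fderiv ℝ W z‖ ≤ M * j z) (μ : ℝ) (hμ : 1 ≤ μ) :
    ‖∫ z, W z * ((Real.cos (2 * μ * ‖z‖) : ℝ) : ℂ) * ((‖z‖⁻¹ : ℝ) : ℂ)‖
      ≤ (∫ z, M * (sing z + j z)) / μ := by
  have hμ0 : 0 < μ := by linarith
  have hK : Integrable (fun z => M * (sing z + j z)) := (sing_int.add hji).const_mul M
  have hWc : Continuous W := hW.continuous
  have hWd : Continuous (fderiv ℝ W) := hW.continuous_fderiv one_ne_zero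
  have hWm : Measurable W := hWc.measurable
  have hWdm : Measurable (fun z => fderiv ℝ W z z) := (hWd.clm_apply continuous_id).measurable
  have d1 : ∀ z, ‖W z‖ * ‖z‖⁻¹ ≤ M * (sing z + j z) := fun z => by
    calc _ ≤ (M * j z) * ‖z‖⁻¹ := by gcongr; exact hb z
      _ = M * (j z * ‖z‖⁻¹) := by ring
      _ ≤ _ := by gcongr; exact (dom _ (hj0 z) (hj1 z) z).1
  have d2 : ∀ z, ‖W z‖ * (‖z‖^2)⁻¹ ≤ M * (sing z + j z) := fun z => by
    calc _ ≤ (M * j z) * (‖z‖^2)⁻¹ := by gcongr; exact hb z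
      _ = M * (j z * (‖z‖^2)⁻¹) := by ring
      _ ≤ _ := by gcongr; exact (dom _ (hj0 z) (hj1 z) z).2
  have d3 : ∀ z, ‖fderiv ℝ W z z‖ * (‖z‖^2)⁻¹ ≤ M * (sing z + j z) := fun z => by
    calc _ ≤ (M * j z * ‖z‖) * (‖z‖^2)⁻¹ := by
          gcongr
          exact (ContinuousLinearMap.le_opNorm _ _).trans (by gcongr; exact hb' z)
      _ = M * (j z * ‖z‖⁻¹) := by
          rcases eq_or_ne ‖z‖ 0 with h | h
          · simp [h]
          · field_simp
      _ ≤ _ := by gcongr; exact (dom _ (hj0 z) (hj1 z) z).1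
  set A : E3 → ℂ := fun z => W z * ((Real.cos (2 * μ * ‖z‖) : ℝ) : ℂ) * ((‖z‖⁻¹ : ℝ) : ℂ) with hA
  set R : E3 → ℂ := fun z => (W z + fderiv ℝ W z z) * ((Real.sin (2 * μ * ‖z‖) : ℝ) : ℂ)
    * (((2 * μ)⁻¹ * (‖z‖ ^ 2)⁻¹ : ℝ) : ℂ) with hR
  set F : E3 → ℂ := fun z => W z * ((Real.sin (2 * μ * ‖z‖) : ℝ) : ℂ)
    * (((2 * μ)⁻¹ * ‖z‖⁻¹ : ℝ) : ℂ) with hF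
  have hi : 0 ≤ (2 * μ)⁻¹ := by positivity
  have hi1 : (2 * μ)⁻¹ ≤ 1 := inv_le_one_of_one_le₀ (by linarith)
  have bA : ∀ z, ‖A z‖ ≤ M * (sing z + j z) := fun z => by
    refine le_trans ?_ (d1 z)
    simp only [hA, norm_mul, Complex.norm_real, Real.norm_eq_abs, abs_inv, abs_norm]
    gcongr
    exact mul_le_of_le_one_right (norm_nonneg _) (Real.abs_cos_le_one _)
  have bF : ∀ z, ‖F z‖ ≤ M * (sing z + j z) := fun z => by
    refine le_trans ?_ (d1 z)
    simp only [hF, norm_mul, Complex.norm_real, Real.norm_eq_abs, abs_mul, abs_inv, abs_norm,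
      abs_of_pos hμ0, Nat.abs_ofNat]
    gcongr
    · exact mul_le_of_le_one_right (norm_nonneg _) (Real.abs_sin_le_one _)
    · exact mul_le_of_le_one_left (by positivity) hi1
  have bR : ∀ z, ‖R z‖ ≤ M * (sing z + j z) * μ⁻¹ := fun z => by
    have : ‖R z‖ ≤ (‖W z‖ + ‖fderiv ℝ W z z‖) * ((2 * μ)⁻¹ * (‖z‖ ^ 2)⁻¹) := by
      simp only [hR, norm_mul, Complex.norm_real, Real.norm_eq_abs, abs_mul, abs_inv, abs_norm,
        abs_of_pos hμ0, Nat.abs_ofNat, abs_pow]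
      gcongr
      exact (mul_le_of_le_one_right (norm_nonneg _) (Real.abs_sin_le_one _)).trans (norm_add_le _ _)
    refine this.trans ?_
    calc _ = (‖W z‖ * (‖z‖^2)⁻¹ + ‖fderiv ℝ W z z‖ * (‖z‖^2)⁻¹) * (2 * μ)⁻¹ := by ring
      _ ≤ (M * (sing z + j z) + M * (sing z + j z)) * (2 * μ)⁻¹ := by
        exact mul_le_mul_of_nonneg_right (add_le_add (d2 z) (d3 z)) hi
      _ = _ := by field_simp; ring
  have iA : Integrable A := hK.mono' (by
    have : Measurable A := by fun_prop
    exact this.aestronglyMeasurable) (Eventually.of_forall bA)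
  have iF : Integrable F := hK.mono' (by
    have : Measurable F := by fun_prop
    exact this.aestronglyMeasurable) (Eventually.of_forall bF)
  have iR : Integrable R := (hK.mul_const μ⁻¹).mono' (by
    have : Measurable R := by fun_prop
    exact this.aestronglyMeasurable) (Eventually.of_forall bR)
  have hform : ∀ ω : E3, ‖ω‖ = 1 → ∀ r : ℝ, 0 ≤ r → (r ^ 2) • F (r • ω)
      = (r : ℂ) * W (r • ω) * ((Real.sin (2 * μ * r) : ℝ) : ℂ) * (((2 * μ)⁻¹ : ℝ) : ℂ) := by
    intro ω hω r hr
    have hn : ‖r • ω‖ = r := by rw [norm_smul, hω, Real.norm_of_nonneg hr, mul_one]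
    simp only [hF, hn]
    rcases eq_or_lt_of_le hr with h | h
    · simp [← h]
    · have : (r : ℂ) ≠ 0 := by exact_mod_cast h.ne'
      rw [Complex.real_smul]
      push_cast
      field_simp
  have hz : ∫ z, (A z + R z) = 0 := by
    refine polar_zero (fun z => A z + R z) F (iA.add iR) iF ?_ ?_
    · intro ω hω r hr
      have hn : ‖r • ω‖ = r := by rw [norm_smul, hω, Real.norm_of_nonneg hr.le, mul_one]
      have h1 : HasDerivAt (fun r : ℝ => (r : ℂ)) 1 r := Complex.ofRealCLM.hasDerivAt
      have h2 : HasDerivAt (fun r : ℝ => W (r • ω)) (fderiv ℝ W (r • ω) ω) r := by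
        have ha : HasDerivAt (fun r : ℝ => r • ω) ω r := by
          simpa using (hasDerivAt_id r).smul_const ω
        exact ((hW.differentiable one_ne_zero) (r • ω)).hasFDerivAt.comp_hasDerivAt r ha
      have h3 : HasDerivAt (fun r : ℝ => ((Real.sin (2 * μ * r) : ℝ) : ℂ))
          ((Real.cos (2 * μ * r) * (2 * μ) : ℝ) : ℂ) r := by
        have : HasDerivAt (fun r : ℝ => Real.sin (2 * μ * r)) (Real.cos (2 * μ * r) * (2 * μ)) r := by
          simpa using ((hasDerivAt_id r).const_mul (2 * μ)).sin
        exact this.ofReal_comp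
      have h4 := ((h1.mul h2).mul h3).mul_const (((2 * μ)⁻¹ : ℝ) : ℂ)
      refine (h4.congr_of_eventuallyEq ?_).congr_deriv ?_
      · filter_upwards [lt_mem_nhds hr] with s hs
        exact hform ω hω s hs.le
      · have hr' : (r : ℂ) ≠ 0 := by exact_mod_cast hr.ne'
        have hμ' : (μ : ℂ) ≠ 0 := by exact_mod_cast hμ0.ne'
        simp only [hA, hR, hn, Complex.real_smul, map_smul]
        push_cast
        simp only [Pi.mul_apply]
        field_simp
        ring
    · intro ω hω
      have : Continuous (fun r : ℝ => (r : ℂ) * W (r • ω) * ((Real.sin (2 * μ * r) : ℝ) : ℂ)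
        * (((2 * μ)⁻¹ : ℝ) : ℂ)) := by fun_prop
      exact this.continuousWithinAt.congr (fun r hr => hform ω hω r hr) (hform ω hω 0 le_rfl)
  rw [integral_add iA iR] at hz
  rw [eq_neg_of_add_eq_zero_left hz, norm_neg, div_eq_mul_inv, ← integral_mul_const]
  exact norm_integral_le_of_norm_le (hK.mul_const _) (Eventually.of_forall bR)

/-- Let `δ > 3` and let `V : ℝ³ → ℂ` be continuously differentiable
with `|V(x)| ≤ M ⟨x⟩^{-δ}` and `|∇V(x)| ≤ M ⟨x⟩^{-δ}` for some `M > 0`. Then there is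
`C > 0` such that for all `μ ≥ 1`,
`|∫∫ V(x)V(y) cos(2μ|x-y|) |x-y|⁻¹ dx dy| ≤ C/μ`. -/
theorem stmt15 (δ : ℝ) (hδ : 3 < δ) (M : ℝ) (hM : 0 < M)
    (V : E3 → ℂ) (hV : ContDiff ℝ 1 V)
    (hbound : ∀ x : E3, ‖V x‖ ≤ M * jap x ^ (-δ))
    (hbound' : ∀ x : E3, ‖fderiv ℝ V x‖ ≤ M * jap x ^ (-δ)) :
    ∃ C : ℝ, 0 < C ∧ ∀ μ : ℝ, 1 ≤ μ →
      ‖∫ p : E3 × E3,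
          V p.1 * V p.2 * ((Real.cos (2 * μ * ‖p.1 - p.2‖) : ℝ) : ℂ)
            * ((‖p.1 - p.2‖⁻¹ : ℝ) : ℂ)‖ ≤ C / μ := by
  have hjp : ∀ x : E3, 0 ≤ jap x ^ (-δ) := fun x =>
    Real.rpow_nonneg (zero_le_one.trans (jap_ge x)) _
  have hs0 : ∀ z, 0 ≤ sing z := fun z => indicator_nonneg (fun _ _ => by positivity) z
  set C0 : ℝ := M * ((∫ z, sing z) + ∫ z : E3, jap z ^ (-δ)) with hC0
  have hC0n : 0 ≤ C0 :=
    mul_nonneg hM.le (add_nonneg (integral_nonneg hs0) (integral_nonneg hjp))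
  set C1 : ℝ := ∫ y : E3, M * jap y ^ (-δ) with hC1
  have hC1n : 0 ≤ C1 := integral_nonneg fun y => mul_nonneg hM.le (hjp y)
  refine ⟨C1 * C0 + 1, by positivity, fun μ hμ => ?_⟩
  have hμ0 : 0 < μ := by linarith
  by_cases hint : Integrable (fun p : E3 × E3 =>
          V p.1 * V p.2 * ((Real.cos (2 * μ * ‖p.1 - p.2‖) : ℝ) : ℂ)
            * ((‖p.1 - p.2‖⁻¹ : ℝ) : ℂ))
  swap
  · rw [integral_undef hint, norm_zero]
    positivity
  have inner : ∀ y : E3, ‖∫ x : E3, V x * V y * ((Real.cos (2 * μ * ‖x - y‖) : ℝ) : ℂ)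
            * ((‖x - y‖⁻¹ : ℝ) : ℂ)‖ ≤ (M * jap y ^ (-δ)) * (C0 / μ) := by
    intro y
    rw [← integral_add_right_eq_self _ y]
    have e : ∀ x : E3, V (x + y) * V y * ((Real.cos (2 * μ * ‖x + y - y‖) : ℝ) : ℂ)
            * ((‖x + y - y‖⁻¹ : ℝ) : ℂ) = V y * (V (x + y) * ((Real.cos (2 * μ * ‖x‖) : ℝ) : ℂ)
            * ((‖x‖⁻¹ : ℝ) : ℂ)) := by
      intro x
      rw [add_sub_cancel_right]
      ring
    simp_rw [e]
    rw [integral_const_mul, norm_mul]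
    have hi : Integrable (fun z : E3 => jap (z + y) ^ (-δ)) := (jap_int δ hδ).comp_add_right y
    have hb := inner_bound M hM (fun z => V (z + y)) (hV.comp (contDiff_id.add contDiff_const))
      (fun z => jap (z + y) ^ (-δ)) (fun z => hjp _) (fun z => jap_le_one δ hδ _) hi
      (fun z => hbound _) (fun z => by rw [fderiv_comp_add_right]; exact hbound' _) μ hμ
    rw [integral_const_mul, integral_add sing_int hi,
      integral_add_right_eq_self (fun z : E3 => jap z ^ (-δ)) y] at hb
    have := hbound y
    have := hjp y
    gcongr
  rw [Measure.volume_eq_prod] at hint ⊢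
  rw [integral_prod_symm _ hint]
  have hJ : Integrable (fun y : E3 => (M * jap y ^ (-δ)) * (C0 / μ)) :=
    ((jap_int δ hδ).const_mul M).mul_const _
  refine (norm_integral_le_of_norm_le hJ (Eventually.of_forall inner)).trans ?_
  rw [integral_mul_const, ← hC1, ← mul_div_assoc]
  gcongr
  linarith
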